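/- arXiv:math/0012105 — 3 statements merged into one kernel-verified Lean document; each statement's English description precedes it below -/
import Mathlib

section
/- Let A be a unital C*-algebra and P : A → A a linear map. Then P is a complete left M-projection (i.e., P∘P = P and for every n ≥ 1 and every n×n matrix x over A one has ‖(Pₙx)*(Pₙx) + (x − Pₙx)*(x − Pₙx)‖ = ‖x‖² in Mₙ(A), where Pₙ is the entrywise application of P) if and only if there exists a self-adjoint idempotent e ∈ A (e = e* = e²) such that P(x) = e·x for all x ∈ A; in that case necessarily e = P(1). -/
section CStarHelpers

open scoped ComplexOrder

attribute [local instance] CStarAlgebra.spectralOrder CStarAlgebra.spectralOrderedRing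

/-- The norm of the unit is at most one (also in the trivial algebra). -/
theorem aux_norm_one_le {B : Type*} [CStarAlgebra B] : ‖(1 : B)‖ ≤ 1 := by
  have h := CStarRing.norm_star_mul_self (x := (1 : B))
  simp only [star_one, mul_one] at h
  nlinarith [norm_nonneg (1 : B), sq_nonneg (‖(1 : B)‖ - 1)]

/-- A positive element of norm at most `c` is below `c`. -/
theorem aux_le_of_norm {B : Type*} [CStarAlgebra B] (y : B) (c : ℝ) (h : ‖y‖ ≤ c)
    (hy : star y = y) : y ≤ algebraMap ℝ B c := by
  have h1 : y ≤ algebraMap ℝ B ‖y‖ := IsSelfAdjoint.le_algebraMap_norm_self hy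
  exact h1.trans (algebraMap_mono B h)

theorem aux_idem {B : Type*} [CStarAlgebra B] (m : B) (hm : m * m = m)
    (h : ‖star m * m + star (1 - m) * (1 - m)‖ ≤ 1) : star m = m := by
  have h1 : star m * m + star (1 - m) * (1 - m) ≤ algebraMap ℝ B 1 :=
    aux_le_of_norm _ 1 h (by simp)
  rw [map_one] at h1
  have hsm : star m * star m = star m := by rw [← star_mul, hm]
  set k : B := star m * (1 - m) + star (1 - m) * m with hk
  have hk0 : 0 ≤ k := by
    have : k = 1 - (star m * m + star (1 - m) * (1 - m)) := by
      simp only [hk, star_sub, star_one]; noncomm_ring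
    rw [this]; exact sub_nonneg.mpr h1
  have hk1 : 0 ≤ star (2 * m - 1) * k * (2 * m - 1) := star_left_conjugate_nonneg hk0 _
  have hss (x : B) : star m * (star m * x) = star m * x := by rw [← mul_assoc, hsm]
  have hk2 : star (2 * m - 1) * k * (2 * m - 1) = -k := by
    simp only [hk, two_mul, star_sub, star_add, star_one, mul_sub, sub_mul, mul_add, add_mul,
      mul_one, one_mul, mul_assoc, hm, hsm, hss]
    abel
  rw [hk2] at hk1
  have hk3 : k = 0 := le_antisymm (by simpa using hk1) hk0
  have hk4 : k * m = m - star m * m := by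
    simp only [hk, star_sub, star_one, mul_sub, sub_mul, add_mul,
      mul_one, one_mul, mul_assoc, hm]
    abel
  rw [hk3, zero_mul] at hk4
  have h5 : m = star m * m := (sub_eq_zero.mp hk4.symm)
  rw [h5]; simp

theorem aux_main {B : Type*} [CStarAlgebra B] (X p E V Y : B) (hE : star E = E) (hEE : E * E = E)
    (hX : star X * X = 2) (hY : Y = E * p + (1 - E) * X)
    (h1 : ‖star p * p + star (Y - p) * (Y - p)‖ = ‖Y‖ ^ 2)
    (h2 : ‖star p * p + star (X - p) * (X - p)‖ = ‖X‖ ^ 2)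
    (hV : E * X * V = 0) : E * p * V = 0 := by
  have hF : (1 - E) * (1 - E) = 1 - E := by simp [mul_sub, sub_mul, hEE]
  have hEF : E * (1 - E) = 0 := by simp [mul_sub, hEE]
  have hFE : (1 - E) * E = 0 := by simp [sub_mul, hEE]
  have hFs : star (1 - E) = 1 - E := by simp [hE]
  have hYp : Y - p = (1 - E) * (X - p) := by rw [hY]; noncomm_ring
  have hE0 : 0 ≤ E := by
    have := star_mul_self_nonneg E
    rwa [hE, hEE] at this
  have hle : star p * p + star (Y - p) * (Y - p) ≤ star p * p + star (X - p) * (X - p) := by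
    refine add_le_add le_rfl ?_
    rw [← sub_nonneg]
    have : star (X - p) * (X - p) - star (Y - p) * (Y - p) = star (X - p) * E * (X - p) := by
      rw [hYp, star_mul, hFs]
      calc _ = star (X - p) * (X - p) - star (X - p) * ((1 - E) * (1 - E)) * (X - p) := by
            noncomm_ring
        _ = _ := by rw [hF]; noncomm_ring
    rw [this]
    exact star_left_conjugate_nonneg hE0 _
  have hnn : ‖Y‖ ^ 2 ≤ ‖X‖ ^ 2 := by
    rw [← h1, ← h2]
    exact CStarAlgebra.norm_le_norm_of_nonneg_of_le
      (add_nonneg (star_mul_self_nonneg _) (star_mul_self_nonneg _)) hle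
  have hX2 : ‖X‖ ^ 2 ≤ 2 := by
    rw [sq, ← CStarRing.norm_star_mul_self, hX]
    calc ‖(2 : B)‖ = ‖(1 : B) + 1‖ := by norm_num
      _ ≤ ‖(1 : B)‖ + ‖(1 : B)‖ := norm_add_le _ _
      _ ≤ 2 := by linarith [aux_norm_one_le (B := B)]
  have hYY : star Y * Y ≤ 2 := by
    have := aux_le_of_norm (star Y * Y) 2
      (by rw [CStarRing.norm_star_mul_self, ← sq]; exact hnn.trans hX2) (by simp)
    rwa [map_ofNat] at this
  have h3 : star V * (star Y * Y) * V ≤ star V * 2 * V := star_left_conjugate_le_conjugate hYY V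
  have h4 : star Y * Y = star (E * p) * (E * p) + star X * X - star (E * X) * (E * X) := by
    rw [hY]
    simp only [star_add, star_mul, hFs, hE]
    calc _ = star p * (E * E) * p + star p * (E * (1 - E)) * X + star X * ((1 - E) * E) * p
          + star X * ((1 - E) * (1 - E)) * X := by noncomm_ring
      _ = star p * (E * E) * p + star X * X - star X * (E * E) * X := by
          rw [hEF, hFE, hF, hEE]; noncomm_ring
      _ = _ := by noncomm_ring
  have h5 : star V * (star Y * Y) * V
      = star (E * p * V) * (E * p * V) + star V * 2 * V - star (E * X * V) * (E * X * V) := by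
    rw [h4, hX]
    simp only [star_mul]
    noncomm_ring
  rw [h5, hV, mul_zero, sub_zero] at h3
  have h6 : star (E * p * V) * (E * p * V) ≤ 0 := by simpa using h3
  exact CStarRing.star_mul_self_eq_zero_iff _ |>.mp (le_antisymm h6 (star_mul_self_nonneg _))

end CStarHelpers


/-- Let `A` be a unital C*-algebra and `P : A → A` a linear map.  The C*-algebra
`Mₙ(A)` of `n × n` matrices over `A` (with its unique C*-norm) is modelled by an arbitrary
C*-algebra `Mat n` together with a ⋆-algebra isomorphism `ι n` from the ⋆-algebra of matrices
`Matrix (Fin n) (Fin n) A`; the norm of a matrix `x` is then `‖ι n x‖`.  `P` is a complete left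
`M`-projection (it is idempotent and, for every `n ≥ 1` and every `x ∈ Mₙ(A)`,
`‖(Pₙx)*(Pₙx) + (x − Pₙx)*(x − Pₙx)‖ = ‖x‖²`, where `Pₙ = x.map P` is the entrywise application)
iff there is a self-adjoint idempotent `e ∈ A` — necessarily `e = P(1)` — with `P(x) = e·x`
for all `x`. -/
theorem stmt_0 {A : Type*} [CStarAlgebra A]
    (Mat : ℕ → Type*) [∀ n, CStarAlgebra (Mat n)]
    (ι : ∀ n, Matrix (Fin n) (Fin n) A ≃⋆ₐ[ℂ] Mat n)
    (P : A →ₗ[ℂ] A) :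
    ((∀ x : A, P (P x) = P x) ∧
      ∀ n : ℕ, 1 ≤ n → ∀ x : Matrix (Fin n) (Fin n) A,
        ‖ι n (star (x.map P) * x.map P + star (x - x.map P) * (x - x.map P))‖
          = ‖ι n x‖ ^ 2) ↔
    ∃ e : A, star e = e ∧ e * e = e ∧ e = P 1 ∧ ∀ x : A, P x = e * x := by
  constructor
  · rintro ⟨hP, h⟩
    have key : ∀ u ∈ unitary A, P u = P 1 * u := by
      intro u hu
      have hu1 : star u * u = 1 := (Unitary.mem_iff.mp hu).1
      have hu2 : u * star u = 1 := (Unitary.mem_iff.mp hu).2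
      let X : Matrix (Fin 2) (Fin 2) A := !![1, u; -star u, 1]
      let E : Matrix (Fin 2) (Fin 2) A := !![1, 0; 0, 0]
      let V : Matrix (Fin 2) (Fin 2) A := !![-u, 0; 1, 0]
      let Y : Matrix (Fin 2) (Fin 2) A := !![P 1, P u; -star u, 1]
      have hYp : Y.map P = X.map P := by
        ext i j; fin_cases i <;> fin_cases j <;> simp [X, Y, hP]
      have h1 := h 2 (by norm_num) Y
      have h2 := h 2 (by norm_num) X
      rw [hYp] at h1
      have hXX : star X * X = 1 + 1 := by
        ext i j
        fin_cases i <;> fin_cases j <;>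
          simp [X, Matrix.mul_apply, Matrix.star_apply, hu1, hu2]
      have hYe : Y = E * X.map P + (1 - E) * X := by
        ext i j
        fin_cases i <;> fin_cases j <;>
          simp [X, Y, E, Matrix.mul_apply, Matrix.vecMul, dotProduct, Fin.sum_univ_two]
      have hEs : star E = E := by
        ext i j; fin_cases i <;> fin_cases j <;> simp [E, Matrix.star_apply]
      have hEE : E * E = E := by
        ext i j; fin_cases i <;> fin_cases j <;> simp [E, Matrix.mul_apply]
      have hV : E * X * V = 0 := by
        ext i j; fin_cases i <;> fin_cases j <;> simp [E, X, V, Matrix.mul_apply]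
      have := aux_main (ι 2 X) (ι 2 (X.map P)) (ι 2 E) (ι 2 V) (ι 2 Y)
        (by rw [← map_star, hEs]) (by rw [← map_mul, hEE])
        (by rw [← map_star, ← map_mul, hXX, map_add, map_one, one_add_one_eq_two])
        (by rw [← map_one (ι 2), ← map_sub, ← map_mul, ← map_mul, ← map_add, ← hYe])
        (by rw [← h1]; simp only [map_add, map_mul, map_star, map_sub])
        (by rw [← h2]; simp only [map_add, map_mul, map_star, map_sub])
        (by rw [← map_mul, ← map_mul, hV, map_zero])
      rw [← map_mul, ← map_mul] at this
      have h0 : E * X.map P * V = 0 := EquivLike.injective (ι 2) (by rw [this, map_zero])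
      have h00 := congrFun (congrFun h0 0) 0
      simp [E, X, V, Matrix.mul_apply, Matrix.vecMul, dotProduct, Fin.sum_univ_two] at h00
      exact (neg_add_eq_zero.mp h00).symm
    have key2 : ∀ x : A, P x = P 1 * x := by
      intro x
      have hx : x ∈ Submodule.span ℂ (unitary A : Set A) := by
        rw [CStarAlgebra.span_unitary]; trivial
      induction hx using Submodule.span_induction with
      | mem x hx => exact key x hx
      | zero => simp
      | add x y _ _ hx hy => rw [map_add, hx, hy, mul_add]
      | smul c x _ hx => rw [map_smul, hx, mul_smul_comm]
    have hee : P 1 * P 1 = P 1 := by rw [← key2, hP]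
    refine ⟨P 1, ?_, hee, rfl, key2⟩
    let M : Matrix (Fin 1) (Fin 1) A := (1 : Matrix (Fin 1) (Fin 1) A).map P
    have hMM : M * M = M := by
      ext i j; fin_cases i; fin_cases j; simp [M, Matrix.mul_apply, hee]
    have h1 := h 1 le_rfl 1
    have := aux_idem (ι 1 M) (by rw [← map_mul, hMM]) (by
      have h2 : ‖ι 1 1‖ ^ 2 ≤ 1 := by
        rw [map_one]
        exact pow_le_one₀ (norm_nonneg _) aux_norm_one_le
      rw [← h1] at h2
      simpa only [map_add, map_mul, map_star, map_sub, map_one] using h2)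
    rw [← map_star] at this
    have h3 := congrFun (congrFun (EquivLike.injective (ι 1) this) 0) 0
    simpa [M, Matrix.star_apply] using h3
  · rintro ⟨e, hs, hee, -, hP⟩
    refine ⟨fun x => by rw [hP, hP, ← mul_assoc, hee], fun n _ x => ?_⟩
    have hD : x.map P = Matrix.diagonal (fun _ => e) * x := by
      ext i j; simp [hP]
    have hDs : star (Matrix.diagonal (fun _ : Fin n => e)) = Matrix.diagonal (fun _ => e) := by
      rw [Matrix.star_eq_conjTranspose, Matrix.diagonal_conjTranspose]
      congr 1; ext; simp [hs]
    have hDD : Matrix.diagonal (fun _ : Fin n => e) * Matrix.diagonal (fun _ => e)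
        = Matrix.diagonal (fun _ => e) := by
      rw [Matrix.diagonal_mul_diagonal]; simp [hee]
    rw [hD]
    generalize Matrix.diagonal (fun _ : Fin n => e) = D at hDs hDD
    have : star (D * x) * (D * x) + star (x - D * x) * (x - D * x) = star x * x := by
      simp only [star_sub, star_mul, hDs]
      calc _ = star x * x + (star x * (D * D) * x - star x * D * x)
            + (star x * (D * D) * x - star x * D * x) := by noncomm_ring
        _ = _ := by rw [hDD]; simp
    rw [this, map_mul, map_star, CStarRing.norm_star_mul_self, sq]
end

section
/- Let M be a von Neumann algebra acting on a complex Hilbert space H and let φ : M → M be a linear map. Then there exists b ∈ M with ‖b‖ ≤ 1 such that φ(x) = b·x for all x ∈ M if and only if for all x, y ∈ M one has ‖φ(x)*φ(x) + y*y‖ ≤ ‖x*x + y*y‖. Moreover, in that case one may take b = φ(1). -/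
open NormedSpace in
/-- Liouville argument: a contractive linear map with `‖φ(x) x⁻¹‖ ≤ 1` is a left multiplication. -/
theorem eq_left_mul_of_bound {A : Type*} [NormedRing A] [NormedAlgebra ℂ A] [CompleteSpace A]
    (φ : A →ₗ[ℂ] A) (h1 : ∀ x, ‖φ x‖ ≤ ‖x‖) (h2 : ∀ x u, x * u = 1 → ‖φ x * u‖ ≤ 1) (a : A) :
    φ a = φ 1 * a := by
  let _ : NormedAlgebra ℚ A := NormedAlgebra.restrictScalars ℚ ℂ A
  let Φ : A →L[ℂ] A := φ.mkContinuous 1 (by simpa using h1)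
  have hΦ : ∀ x, Φ x = φ x := fun x => rfl
  have hd : ∀ z : ℂ, HasDerivAt (fun z : ℂ => Φ (exp (z • a))) (Φ (exp (z • a) * a)) z := fun z =>
    Φ.hasFDerivAt.comp_hasDerivAt z (hasDerivAt_exp_smul_const a z)
  have he : ∀ z : ℂ, HasDerivAt (fun z : ℂ => exp (z • (-a))) (exp (z • (-a)) * (-a)) z := fun z =>
    hasDerivAt_exp_smul_const (-a) z
  have hinv : ∀ z : ℂ, exp (z • a) * exp (z • (-a)) = 1 := by
    intro z
    rw [← exp_add_of_commute, smul_neg, add_neg_cancel, exp_zero]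
    rw [smul_neg]
    exact (Commute.refl _).neg_right
  have hf := fun z => (hd z).mul (he z)
  have hc : ∀ z w : ℂ, Φ (exp (z • a)) * exp (z • (-a)) = Φ (exp (w • a)) * exp (w • (-a)) := by
    refine Differentiable.apply_eq_apply_of_bounded
      (f := fun z : ℂ => Φ (exp (z • a)) * exp (z • (-a))) (fun z => (hf z).differentiableAt) ?_
    refine isBounded_iff_forall_norm_le.2 ⟨1, ?_⟩
    rintro _ ⟨z, rfl⟩
    exact h2 _ _ (hinv z)
  have h0 : HasDerivAt (fun z : ℂ => Φ (exp (z • a)) * exp (z • (-a))) 0 0 := by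
    have : (fun z : ℂ => Φ (exp (z • a)) * exp (z • (-a))) =
        fun _ => Φ (exp ((0 : ℂ) • a)) * exp ((0 : ℂ) • (-a)) := funext fun z => hc z 0
    rw [this]
    exact hasDerivAt_const _ _
  have := (hf 0).unique h0
  simp [hΦ] at this
  exact (sub_eq_zero.1 (by simpa [sub_eq_add_neg] using this))

/-- The column estimate implies `φ(x)*φ(x) ≤ x*x` . -/
theorem star_mul_le_of_column {H : Type*} [NormedAddCommGroup H] [InnerProductSpace ℂ H]
    [CompleteSpace H] (M : VonNeumannAlgebra H) (a x : H →L[ℂ] H) (hx : x ∈ M)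
    (h : ∀ y ∈ M, ‖star a * a + star y * y‖ ≤ ‖star x * x + star y * y‖) :
    star a * a ≤ star x * x := by
  set t : ℝ := ‖x‖ ^ 2 with ht
  set d : H →L[ℂ] H := algebraMap ℝ _ t - star x * x with hd
  have hd0 : 0 ≤ d := sub_nonneg.2 CStarAlgebra.star_mul_le_algebraMap_norm_sq
  set y := CFC.sqrt d with hy
  have hyy : star y * y = d := by
    rw [(CFC.sqrt_nonneg d).isSelfAdjoint.star_eq]
    exact CFC.sqrt_mul_sqrt_self d hd0
  have hyM : y ∈ M := by
    rw [← M.commutant_commutant, VonNeumannAlgebra.mem_commutant_iff]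
    intro g hg
    rw [VonNeumannAlgebra.mem_commutant_iff] at hg
    have hgc : Commute (star x * x) g := hg _ (mul_mem (star_mem hx) hx)
    have hdg : Commute d g := Commute.sub_left (Algebra.commutes t g) hgc
    exact ((hdg.cfcₙ_nnreal NNReal.sqrt).eq).symm
  have hn := h y hyM
  have e : star x * x + d = algebraMap ℝ _ t := by rw [hd]; abel
  rw [hyy, e] at hn
  have hbound : ‖star a * a + d‖ ≤ t := by
    refine hn.trans ?_
    rw [Algebra.algebraMap_eq_smul_one, norm_smul, Real.norm_of_nonneg (by positivity)]
    exact mul_le_of_le_one_right (by positivity) ContinuousLinearMap.norm_id_le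
  rw [CStarAlgebra.norm_le_iff_le_algebraMap _ (by positivity)
    (add_nonneg (star_mul_self_nonneg a) hd0), ← e] at hbound
  exact le_of_add_le_add_right hbound


/-- Let `M` be a von Neumann algebra on a complex Hilbert space `H` and
`φ : M → M` a linear map.  Then there is `b ∈ M` with `‖b‖ ≤ 1` and `φ(x) = b·x` for all
`x ∈ M` iff `‖φ(x)*φ(x) + y*y‖ ≤ ‖x*x + y*y‖` for all `x, y ∈ M` (the column map
`(x,y) ↦ (φ(x), y)` is contractive on `C₂(M)`); moreover one may then take `b = φ(1)`. -/
theorem stmt_1 {H : Type*} [NormedAddCommGroup H] [InnerProductSpace ℂ H] [CompleteSpace H]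
    (M : VonNeumannAlgebra H)
    (φ : M.toStarSubalgebra →ₗ[ℂ] M.toStarSubalgebra) :
    (∃ b : H →L[ℂ] H, b ∈ M ∧ ‖b‖ ≤ 1 ∧ b = (φ 1 : H →L[ℂ] H) ∧
        ∀ x : M.toStarSubalgebra, (φ x : H →L[ℂ] H) = b * (x : H →L[ℂ] H)) ↔
      ∀ x y : M.toStarSubalgebra,
        ‖star ((φ x : H →L[ℂ] H)) * (φ x : H →L[ℂ] H) +
            star ((y : H →L[ℂ] H)) * (y : H →L[ℂ] H)‖ ≤
          ‖star ((x : H →L[ℂ] H)) * (x : H →L[ℂ] H) +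
            star ((y : H →L[ℂ] H)) * (y : H →L[ℂ] H)‖ := by
  constructor
  · rintro ⟨b, -, hb, -, h⟩ x y
    refine CStarAlgebra.norm_le_norm_of_nonneg_of_le
      (add_nonneg (star_mul_self_nonneg _) (star_mul_self_nonneg _)) ?_
    refine add_le_add_left ?_ _
    rw [h x, star_mul, mul_assoc, ← mul_assoc (star b)]
    have hbb : star b * b ≤ 1 := by
      rw [← CStarAlgebra.norm_le_one_iff_of_nonneg _ (star_mul_self_nonneg b),
        CStarRing.norm_star_mul_self]
      exact mul_le_one₀ hb (norm_nonneg _) hb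
    have := star_left_conjugate_le_conjugate hbb (x : H →L[ℂ] H)
    simpa [mul_assoc] using this
  · intro h
    have hle : ∀ x : M.toStarSubalgebra, star (φ x : H →L[ℂ] H) * (φ x : H →L[ℂ] H) ≤
        star (x : H →L[ℂ] H) * (x : H →L[ℂ] H) := fun x =>
      star_mul_le_of_column M _ _ x.2 fun y hy => h x ⟨y, hy⟩
    have hcl : IsClosed (M.toStarSubalgebra : Set (H →L[ℂ] H)) := by
      rw [VonNeumannAlgebra.coe_toStarSubalgebra, ← M.centralizer_centralizer]
      exact Set.isClosed_centralizer _
    have : CompleteSpace M.toStarSubalgebra := hcl.completeSpace_coe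
    have key : ∀ x u : H →L[ℂ] H, ∀ c : H →L[ℂ] H, star c * c ≤ star x * x → x * u = 1 →
        ‖c * u‖ ≤ 1 := by
      intro x u c hc hu
      have h3 : star (c * u) * (c * u) ≤ 1 := by
        have := star_left_conjugate_le_conjugate hc u
        have e : star u * (star x * x) * u = 1 := by
          rw [mul_assoc, mul_assoc, hu, mul_one, ← star_mul, hu, star_one]
        rw [e] at this
        simpa [mul_assoc] using this
      rw [← CStarAlgebra.norm_le_one_iff_of_nonneg _ (star_mul_self_nonneg _),
        CStarRing.norm_star_mul_self] at h3
      nlinarith [norm_nonneg (c * u)]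
    have hnorm : ∀ x, ‖φ x‖ ≤ ‖x‖ := by
      intro x
      have h3 := CStarAlgebra.norm_le_norm_of_nonneg_of_le (star_mul_self_nonneg _) (hle x)
      rw [CStarRing.norm_star_mul_self, CStarRing.norm_star_mul_self] at h3
      exact abs_le_of_sq_le_sq' (by simpa [sq] using h3) (norm_nonneg _) |>.2
    have hmul := eq_left_mul_of_bound φ hnorm fun x u hu =>
      key x u (φ x) (hle x) (by simpa using congrArg Subtype.val hu)
    refine ⟨φ 1, (φ 1).2, ?_, rfl, fun x => congrArg Subtype.val (hmul x)⟩
    simpa using key 1 1 (φ 1) (by simpa using hle 1) (by simp)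
end

section
/- Let B be a C*-algebra, let A ⊆ B be a norm-closed subalgebra containing the unit of B, and let P : A → A be a linear map. Then P is a complete left M-projection (i.e., P∘P = P and for every n ≥ 1 and every n×n matrix x over A, ‖(Pₙx)*(Pₙx) + (x − Pₙx)*(x − Pₙx)‖ = ‖x‖², the norm being that of Mₙ(B)) if and only if there exists e ∈ A which is a self-adjoint idempotent in B (e = e* = e²) such that P(x) = e·x for all x ∈ A. -/
section aux
variable {C : Type*} [CStarAlgebra C] [PartialOrder C] [StarOrderedRing C]

theorem aux_le_zero (a : C) (h : ∀ ε : ℝ, 0 < ε → a ≤ algebraMap ℝ C ε) : a ≤ 0 := by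
  have ht : Filter.Tendsto (fun ε : ℝ => algebraMap ℝ C ε) (nhdsWithin 0 (Set.Ioi 0)) (nhds 0) := by
    have : Continuous (fun ε : ℝ => algebraMap ℝ C ε) := continuous_algebraMap ℝ C
    have h2 := this.tendsto 0
    simp only [map_zero] at h2
    exact h2.mono_left nhdsWithin_le_nhds
  refine ge_of_tendsto ht ?_
  filter_upwards [self_mem_nhdsWithin] with ε hε using h ε hε

theorem aux_mul_zero (a p : C) (ha : 0 ≤ a) (hp : star p * a * p = 0) : a * p = 0 := by
  obtain ⟨r, rfl⟩ := CStarAlgebra.nonneg_iff_eq_star_mul_self.mp ha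
  have : star (r * p) * (r * p) = 0 := by rw [← hp, star_mul]; noncomm_ring
  rw [CStarRing.star_mul_self_eq_zero_iff] at this
  rw [mul_assoc, this, mul_zero]

theorem aux_star_mul_le (a : C) (c : ℝ) (h : ‖a‖ ^ 2 ≤ c) : star a * a ≤ algebraMap ℝ C c := by
  refine (IsSelfAdjoint.le_algebraMap_norm_self (IsSelfAdjoint.star_mul_self a)).trans ?_
  apply algebraMap_mono
  rw [CStarRing.norm_star_mul_self]; nlinarith

theorem aux_core (X X' S W p : C) (hp : star p = p) (hS : star S * S = p)
    (hpp : p * p = p)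
    (hX : star X * S = 0) (hX' : star X' * S = 0) (hW : p * W = W) (hWp : W * p = W)
    (hXp : X' * p = X')
    (hN : ∀ N : ℝ, 0 < N → ‖X' + (N • S + N⁻¹ • (S * W))‖ = ‖X + (N • S + N⁻¹ • (S * W))‖)
    (h : star X * X + (W + star W) ≤ 0) : star X' * X' + (W + star W) ≤ 0 := by
  have hSX : star S * X = 0 := by simpa using congrArg star hX
  have hSX' : star S * X' = 0 := by simpa using congrArg star hX'
  have hWs : star W * p = star W := by simpa [hp] using congrArg star hW
  have hpWs : p * star W = star W := by simpa [hp] using congrArg star hWp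
  have hpX : p * star X' = star X' := by simpa [hp] using congrArg star hXp
  have key : ∀ (Z : C), star Z * S = 0 → star S * Z = 0 → ∀ N : ℝ, 0 < N →
      star (Z + (N • S + N⁻¹ • (S * W))) * (Z + (N • S + N⁻¹ • (S * W)))
        = star Z * Z + (W + star W) + (N^2 • p + (N⁻¹)^2 • (star W * W)) := by
    intro Z h1 h2 N hN
    have e1 : star Z * (S * W) = 0 := by rw [← mul_assoc, h1, zero_mul]
    have e2 : star S * (S * W) = W := by rw [← mul_assoc, hS, hW]
    simp only [star_add, star_smul, star_mul, mul_add, add_mul, smul_mul_assoc, mul_smul_comm,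
      mul_assoc, h1, h2, hS, e1, e2, hWs, smul_zero, mul_zero, smul_add, smul_smul, star_trivial]
    rw [mul_inv_cancel₀ hN.ne', inv_mul_cancel₀ hN.ne', one_smul, one_smul, ← pow_two, ← pow_two]
    abel
  have hp1 : p ≤ 1 := by
    have : 0 ≤ star (1 - p) * (1 - p) := star_mul_self_nonneg _
    have e : star (1 - p) * (1 - p) = 1 - p := by
      rw [star_sub, star_one, hp]; simp [mul_sub, sub_mul, hpp]
    rw [e] at this
    exact sub_nonneg.mp this
  have hWW := aux_star_mul_le W _ le_rfl
  have step : ∀ N : ℝ, 0 < N → star X' * X' + (W + star W) ≤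
      algebraMap ℝ C ((N⁻¹)^2 * ‖W‖^2) := by
    intro N hNp
    have b1 : star (X + (N • S + N⁻¹ • (S * W))) * (X + (N • S + N⁻¹ • (S * W)))
        ≤ algebraMap ℝ C (N^2 + (N⁻¹)^2 * ‖W‖^2) := by
      rw [key X hX hSX N hNp]
      have a1 : N^2 • p ≤ algebraMap ℝ C (N^2) := by
        rw [Algebra.algebraMap_eq_smul_one]
        exact smul_le_smul_of_nonneg_left hp1 (by positivity)
      have a2 : (N⁻¹)^2 • (star W * W) ≤ algebraMap ℝ C ((N⁻¹)^2 * ‖W‖^2) := by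
        rw [map_mul, ← Algebra.smul_def]
        exact smul_le_smul_of_nonneg_left hWW (by positivity)
      rw [map_add]
      calc _ ≤ 0 + (algebraMap ℝ C (N^2) + algebraMap ℝ C ((N⁻¹)^2 * ‖W‖^2)) :=
            add_le_add h (add_le_add a1 a2)
        _ = _ := zero_add _
    have b2 : ‖X + (N • S + N⁻¹ • (S * W))‖ ^ 2 ≤ N^2 + (N⁻¹)^2 * ‖W‖^2 := by
      rw [pow_two, ← CStarRing.norm_star_mul_self]
      exact (CStarAlgebra.norm_le_iff_le_algebraMap _ (by positivity)
        (star_mul_self_nonneg _)).mpr b1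
    rw [← hN N hNp] at b2
    have b3 := aux_star_mul_le _ _ b2
    rw [key X' hX' hSX' N hNp] at b3
    have b4 := star_left_conjugate_le_conjugate b3 p
    have e1 : star p * (star X' * X' + (W + star W) + (N^2 • p + (N⁻¹)^2 • (star W * W))) * p
       = star X' * X' + (W + star W) + (N^2 • p + (N⁻¹)^2 • (star W * W)) := by
      simp only [hp, mul_add, add_mul, ← mul_assoc, hpX, hW, hpWs, mul_smul_comm, smul_mul_assoc, hpp]
      simp only [mul_assoc, hXp, hWp, hWs]
    have e2 : star p * algebraMap ℝ C (N^2 + (N⁻¹)^2 * ‖W‖^2) * p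
        = N^2 • p + ((N⁻¹)^2 * ‖W‖^2) • p := by
      rw [Algebra.algebraMap_eq_smul_one, hp]; simp [hpp, add_smul, mul_add, add_mul]
    rw [e1, e2] at b4
    have c1 : 0 ≤ (N⁻¹)^2 • (star W * W) := smul_nonneg (by positivity) (star_mul_self_nonneg _)
    have c2 : ((N⁻¹)^2 * ‖W‖^2) • p ≤ algebraMap ℝ C ((N⁻¹)^2 * ‖W‖^2) := by
        rw [Algebra.algebraMap_eq_smul_one]
        exact smul_le_smul_of_nonneg_left hp1 (by positivity)
    refine le_trans ?_ c2
    rw [← sub_nonneg] at b4 ⊢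
    have := add_nonneg b4 c1
    convert this using 1
    abel
  apply aux_le_zero
  intro ε hε
  set N : ℝ := (‖W‖ + 1) / Real.sqrt ε
  have hs : 0 < Real.sqrt ε := Real.sqrt_pos.mpr hε
  have hNp : 0 < N := by positivity
  refine (step N hNp).trans (algebraMap_mono _ ?_)
  have : (N⁻¹)^2 * ‖W‖^2 = ε * (‖W‖ / (‖W‖+1))^2 := by
    simp only [N]; rw [inv_div, div_pow, Real.sq_sqrt hε.le, div_pow]; ring
  rw [this]
  have h1 : ‖W‖ / (‖W‖+1) ≤ 1 := by
    rw [div_le_one (by positivity)]; linarith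
  have h0 : 0 ≤ ‖W‖ / (‖W‖+1) := by positivity
  have : (‖W‖ / (‖W‖+1))^2 ≤ 1 := pow_le_one₀ h0 h1
  nlinarith

theorem aux_sa (d : C) (h : ∀ s : ℝ, ‖(1 : C) + ((s : ℂ) * Complex.I) • d‖ ^ 2 ≤ 1 + s ^ 2) :
    star d = d := by
  have h1 : ∀ s : ℝ, s • (Complex.I • (d - star d)) ≤ algebraMap ℝ C (s^2) := by
    intro s
    have := aux_star_mul_le _ _ (h s)
    have e : star ((1 : C) + ((s : ℂ) * Complex.I) • d) * (1 + ((s : ℂ) * Complex.I) • d)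
      = 1 + s • (Complex.I • (d - star d)) + (s^2) • (star d * d) := by
      have r1 : ∀ (r : ℝ) (x : C), r • x = (r : ℂ) • x := fun r x => (Complex.coe_smul r x).symm
      simp only [star_add, star_smul, star_one, mul_add, add_mul, smul_mul_assoc, mul_smul_comm,
        one_mul, mul_one, r1, smul_sub, smul_add, smul_smul]
      simp only [RCLike.star_def, map_mul, Complex.conj_ofReal, Complex.conj_I]
      have : (s : ℂ) * -Complex.I * (s * Complex.I) = ((s^2 : ℝ) : ℂ) := by
        push_cast; linear_combination (-(s:ℂ)^2) * Complex.I_mul_I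
      have t2 : (s : ℂ) * Complex.I * (s * -Complex.I) = ((s^2 : ℝ) : ℂ) := by
        push_cast; linear_combination (-(s:ℂ)^2) * Complex.I_mul_I
      simp only [this, t2]
      simp only [mul_neg, neg_smul]
      abel
    rw [e, map_add, map_one] at this
    have c : 0 ≤ (s^2) • (star d * d) := smul_nonneg (by positivity) (star_mul_self_nonneg _)
    rw [← sub_nonneg] at this ⊢
    have := add_nonneg this c
    convert this using 1
    abel
  have h2 : ∀ s : ℝ, 0 < s → ∀ x : C, s • x ≤ algebraMap ℝ C (s^2) → x ≤ algebraMap ℝ C s := by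
    intro s hs x hx
    have := smul_le_smul_of_nonneg_left hx (inv_nonneg.mpr hs.le)
    rw [smul_smul, inv_mul_cancel₀ hs.ne', one_smul, Algebra.smul_def, ← map_mul] at this
    convert this using 2
    field_simp
  have h3 : Complex.I • (d - star d) ≤ 0 := aux_le_zero _ fun s hs => h2 s hs _ (h1 s)
  have h4 : -(Complex.I • (d - star d)) ≤ 0 := aux_le_zero _ fun s hs => h2 s hs _ (by
    have := h1 (-s)
    rw [neg_smul, neg_sq] at this
    rwa [smul_neg])
  have h5 : Complex.I • (d - star d) = 0 := le_antisymm h3 (by simpa using h4)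
  rw [smul_eq_zero_iff_right Complex.I_ne_zero] at h5
  exact (sub_eq_zero.mp h5).symm
end aux

section mats
variable {B : Type*} [CStarAlgebra B] {C : Type*} [CStarAlgebra C]
    (ι : Matrix (Fin 4) (Fin 4) B ≃⋆ₐ[ℂ] C)
    (A : Subalgebra ℂ B) (P : A →ₗ[ℂ] A)

theorem aux_rows (hP : ∀ x : A, P (P x) = P x)
    (h : ∀ x : Matrix (Fin 4) (Fin 4) A,
        ‖ι (star (x.map fun a => ((P a : B))) * (x.map fun a => ((P a : B))) +
            star (x.map (Subtype.val) - x.map fun a => ((P a : B))) *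
              (x.map (Subtype.val) - x.map fun a => ((P a : B))))‖
          = ‖ι (x.map (Subtype.val))‖ ^ 2) (x0 x1 a b c d : A) :
    ‖ι !![(P x0 : B), (P x1 : B), 0, 0; (x0 : B) - P x0, (x1 : B) - P x1, 0, 0;
       (a : B), (b : B), 0, 0; (c : B), (d : B), 0, 0]‖ =
    ‖ι !![(x0 : B), (x1 : B), 0, 0; 0, 0, 0, 0; (a : B), (b : B), 0, 0; (c : B), (d : B), 0, 0]‖ := by
  have h1 := h !![x0, x1, 0, 0; 0, 0, 0, 0; a, b, 0, 0; c, d, 0, 0]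
  have h2 := h !![P x0, P x1, 0, 0; x0 - P x0, x1 - P x1, 0, 0; a, b, 0, 0; c, d, 0, 0]
  have e1 : (!![x0, x1, 0, 0; 0, 0, 0, 0; a, b, 0, 0; c, d, 0, 0] :
      Matrix (Fin 4) (Fin 4) A).map Subtype.val =
      !![(x0 : B), (x1 : B), 0, 0; 0, 0, 0, 0; (a : B), (b : B), 0, 0; (c : B), (d : B), 0, 0] := by
    ext i j; fin_cases i <;> fin_cases j <;> rfl
  have e2 : (!![P x0, P x1, 0, 0; x0 - P x0, x1 - P x1, 0, 0; a, b, 0, 0; c, d, 0, 0] :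
      Matrix (Fin 4) (Fin 4) A).map Subtype.val =
      !![(P x0 : B), (P x1 : B), 0, 0; (x0 : B) - P x0, (x1 : B) - P x1, 0, 0;
       (a : B), (b : B), 0, 0; (c : B), (d : B), 0, 0] := by
    ext i j; fin_cases i <;> fin_cases j <;> rfl
  have e3 : (!![x0, x1, 0, 0; 0, 0, 0, 0; a, b, 0, 0; c, d, 0, 0] :
      Matrix (Fin 4) (Fin 4) A).map (fun a => (P a : B)) =
      !![(P x0 : B), (P x1 : B), 0, 0; 0, 0, 0, 0; (P a : B), (P b : B), 0, 0;
        (P c : B), (P d : B), 0, 0] := by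
    ext i j; fin_cases i <;> fin_cases j <;> simp
  have e4 : (!![P x0, P x1, 0, 0; x0 - P x0, x1 - P x1, 0, 0; a, b, 0, 0; c, d, 0, 0] :
      Matrix (Fin 4) (Fin 4) A).map (fun a => (P a : B)) =
      !![(P x0 : B), (P x1 : B), 0, 0; 0, 0, 0, 0; (P a : B), (P b : B), 0, 0;
        (P c : B), (P d : B), 0, 0] := by
    ext i j; fin_cases i <;> fin_cases j <;> simp [hP]
  rw [e1, e3] at h1
  rw [e2, e4] at h2
  rw [← pow_left_inj₀ (norm_nonneg _) (norm_nonneg _) two_ne_zero, ← h1, ← h2]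
  congr 3
  ext i j
  simp only [Matrix.mul_apply, Fin.sum_univ_four, Matrix.star_apply, Matrix.sub_apply]
  fin_cases i <;> fin_cases j <;> simp

set_option maxHeartbeats 2000000 in
/-- The order-theoretic consequence of the M-projection identity. -/
theorem aux_mat [PartialOrder C] [StarOrderedRing C] (hP : ∀ x : A, P (P x) = P x)
    (h : ∀ x : Matrix (Fin 4) (Fin 4) A,
        ‖ι (star (x.map fun a => ((P a : B))) * (x.map fun a => ((P a : B))) +
            star (x.map (Subtype.val) - x.map fun a => ((P a : B))) *
              (x.map (Subtype.val) - x.map fun a => ((P a : B))))‖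
          = ‖ι (x.map (Subtype.val))‖ ^ 2) (x0 x1 a b c d : A)
    (hle : ι (star !![(x0 : B), (x1 : B), 0, 0; 0, 0, 0, 0; 0, 0, 0, 0; 0, 0, 0, 0] *
        !![(x0 : B), (x1 : B), 0, 0; 0, 0, 0, 0; 0, 0, 0, 0; 0, 0, 0, 0] +
        (!![(a : B), (b : B), 0, 0; (c : B), (d : B), 0, 0; 0, 0, 0, 0; 0, 0, 0, 0] +
        star !![(a : B), (b : B), 0, 0; (c : B), (d : B), 0, 0; 0, 0, 0, 0; 0, 0, 0, 0])) ≤ 0) :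
    ι (star !![(P x0 : B), (P x1 : B), 0, 0; (x0 : B) - P x0, (x1 : B) - P x1, 0, 0;
          0, 0, 0, 0; 0, 0, 0, 0] *
        !![(P x0 : B), (P x1 : B), 0, 0; (x0 : B) - P x0, (x1 : B) - P x1, 0, 0;
          0, 0, 0, 0; 0, 0, 0, 0] +
        (!![(a : B), (b : B), 0, 0; (c : B), (d : B), 0, 0; 0, 0, 0, 0; 0, 0, 0, 0] +
        star !![(a : B), (b : B), 0, 0; (c : B), (d : B), 0, 0; 0, 0, 0, 0; 0, 0, 0, 0])) ≤ 0 := by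
  set X : Matrix (Fin 4) (Fin 4) B :=
    !![(x0 : B), (x1 : B), 0, 0; 0, 0, 0, 0; 0, 0, 0, 0; 0, 0, 0, 0] with hX
  set X' : Matrix (Fin 4) (Fin 4) B :=
    !![(P x0 : B), (P x1 : B), 0, 0; (x0 : B) - P x0, (x1 : B) - P x1, 0, 0;
          0, 0, 0, 0; 0, 0, 0, 0] with hX'
  set W : Matrix (Fin 4) (Fin 4) B :=
    !![(a : B), (b : B), 0, 0; (c : B), (d : B), 0, 0; 0, 0, 0, 0; 0, 0, 0, 0] with hW
  set S : Matrix (Fin 4) (Fin 4) B :=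
    !![0, 0, 0, 0; 0, 0, 0, 0; 1, 0, 0, 0; 0, 1, 0, 0] with hS
  set p : Matrix (Fin 4) (Fin 4) B :=
    !![1, 0, 0, 0; 0, 1, 0, 0; 0, 0, 0, 0; 0, 0, 0, 0] with hp
  have := aux_core (ι X) (ι X') (ι S) (ι W) (ι p)
  simp only [← map_star, ← map_mul, ← map_add] at this
  refine this ?_ ?_ ?_ ?_ ?_ ?_ ?_ ?_ ?_ hle
  · congr 1; ext i j; fin_cases i <;> fin_cases j <;> simp [p]
  · congr 1; ext i j
    simp only [Matrix.mul_apply, Fin.sum_univ_four, Matrix.star_apply]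
    fin_cases i <;> fin_cases j <;> simp [p, S]
  · congr 1; ext i j
    simp only [Matrix.mul_apply, Fin.sum_univ_four]
    fin_cases i <;> fin_cases j <;> simp [p]
  · rw [← map_zero ι]; congr 1; ext i j
    simp only [Matrix.mul_apply, Fin.sum_univ_four, Matrix.star_apply]
    fin_cases i <;> fin_cases j <;> simp [X, S]
  · rw [← map_zero ι]; congr 1; ext i j
    simp only [Matrix.mul_apply, Fin.sum_univ_four, Matrix.star_apply]
    fin_cases i <;> fin_cases j <;> simp [X', S]
  · congr 1; ext i j
    simp only [Matrix.mul_apply, Fin.sum_univ_four]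
    fin_cases i <;> fin_cases j <;> simp [p, W]
  · congr 1; ext i j
    simp only [Matrix.mul_apply, Fin.sum_univ_four]
    fin_cases i <;> fin_cases j <;> simp [p, W]
  · congr 1; ext i j
    simp only [Matrix.mul_apply, Fin.sum_univ_four]
    fin_cases i <;> fin_cases j <;> simp [p, X']
  · intro N hN
    have r := aux_rows ι A P hP h x0 x1 ((N : ℂ) • 1 + (N⁻¹ : ℂ) • a) ((N⁻¹ : ℂ) • b)
      ((N⁻¹ : ℂ) • c) ((N : ℂ) • 1 + (N⁻¹ : ℂ) • d)
    have r1 : ∀ (r : ℝ) (x : C), r • x = (r : ℂ) • x := fun r x => (Complex.coe_smul r x).symm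
    simp only [r1, ← map_smul, ← map_add]
    convert r using 3
    · ext i j
      simp only [Matrix.mul_apply, Fin.sum_univ_four, Matrix.add_apply, Matrix.smul_apply]
      fin_cases i <;> fin_cases j <;> simp [S, X', W]
    · ext i j
      simp only [Matrix.mul_apply, Fin.sum_univ_four, Matrix.add_apply, Matrix.smul_apply]
      fin_cases i <;> fin_cases j <;> simp [S, X, W]

end mats

theorem aux_e_sa {B : Type*} [CStarAlgebra B] {C : Type*} [CStarAlgebra C]
    (ι : Matrix (Fin 1) (Fin 1) B ≃⋆ₐ[ℂ] C)
    (A : Subalgebra ℂ B) (P : A →ₗ[ℂ] A) (hP : ∀ x : A, P (P x) = P x)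
    (h : ∀ x : Matrix (Fin 1) (Fin 1) A,
        ‖ι (star (x.map fun a => ((P a : B))) * (x.map fun a => ((P a : B))) +
            star (x.map (Subtype.val) - x.map fun a => ((P a : B))) *
              (x.map (Subtype.val) - x.map fun a => ((P a : B))))‖
          = ‖ι (x.map (Subtype.val))‖ ^ 2) : star (P 1 : B) = P 1 := by
  letI : PartialOrder C := CStarAlgebra.spectralOrder C
  haveI : StarOrderedRing C := CStarAlgebra.spectralOrderedRing C
  have h1 : ‖(1 : C)‖ ≤ 1 := by
    rcases subsingleton_or_nontrivial C with hs | hs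
    · rw [Subsingleton.elim (1 : C) 0]; simp
    · simp
  set G : Matrix (Fin 1) (Fin 1) B := Matrix.of fun _ _ =>
    star (P 1 : B) * (P 1 : B) + star (1 - (P 1 : B)) * (1 - (P 1 : B)) with hG
  have hone : ‖ι G‖ ≤ 1 := by
    have := h (Matrix.of fun _ _ => 1)
    have e1 : (Matrix.of fun _ _ => (1 : A) : Matrix (Fin 1) (Fin 1) A).map Subtype.val
      = (1 : Matrix (Fin 1) (Fin 1) B) := by
      ext i j; fin_cases i; fin_cases j; simp
    rw [e1, map_one] at this
    have e2 : ‖ι G‖ = ‖(1 : C)‖ ^ 2 := by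
      rw [← this]
      congr 2
      ext i j; fin_cases i; fin_cases j; simp [G, Matrix.mul_apply]
    rw [e2]
    exact pow_le_one₀ (norm_nonneg _) h1
  set D : Matrix (Fin 1) (Fin 1) B := Matrix.of fun _ _ => (P 1 : B) - (1 - (P 1 : B)) with hD
  have hs := aux_sa (ι D) (by
    intro s
    have := h (Matrix.of fun _ _ => (1 + (s : ℂ) * Complex.I) • P 1 +
      (1 - (s : ℂ) * Complex.I) • (1 - P 1))
    have e1 : (Matrix.of fun _ _ => (1 + (s : ℂ) * Complex.I) • P 1 +
      (1 - (s : ℂ) * Complex.I) • (1 - P 1) : Matrix (Fin 1) (Fin 1) A).map Subtype.val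
      = 1 + ((s : ℂ) * Complex.I) • D := by
      ext i j; fin_cases i; fin_cases j
      simp [D]
      module
    have e0 : (1 : C) + ((s : ℂ) * Complex.I) • ι D = ι (1 + ((s : ℂ) * Complex.I) • D) := by
      rw [map_add, map_smul, map_one]
    rw [e1] at this
    rw [e0, ← this]
    have e2 : (Matrix.of fun _ _ => (1 + (s : ℂ) * Complex.I) • P 1 +
      (1 - (s : ℂ) * Complex.I) • (1 - P 1) : Matrix (Fin 1) (Fin 1) A).map (fun a => (P a : B))
      = Matrix.of fun _ _ => (1 + (s : ℂ) * Complex.I) • (P 1 : B) := by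
      ext i j; fin_cases i; fin_cases j
      simp [hP]
    have e3 : (1 + ((s : ℂ) * Complex.I) • D) -
        (Matrix.of fun _ _ => (1 + (s : ℂ) * Complex.I) • (P 1 : B))
      = Matrix.of fun _ _ => (1 - (s : ℂ) * Complex.I) • (1 - (P 1 : B)) := by
      ext i j; fin_cases i; fin_cases j
      simp [D]
      module
    rw [e2, e3]
    have e4 : star (Matrix.of fun _ _ => (1 + (s : ℂ) * Complex.I) • (P 1 : B) :
          Matrix (Fin 1) (Fin 1) B) *
          (Matrix.of fun _ _ => (1 + (s : ℂ) * Complex.I) • (P 1 : B)) +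
        star (Matrix.of fun _ _ => (1 - (s : ℂ) * Complex.I) • (1 - (P 1 : B)) :
          Matrix (Fin 1) (Fin 1) B) *
          (Matrix.of fun _ _ => (1 - (s : ℂ) * Complex.I) • (1 - (P 1 : B)))
        = ((1 + s ^ 2 : ℝ) : ℂ) • G := by
      have t1 : star (1 + (s : ℂ) * Complex.I) * (1 + (s : ℂ) * Complex.I) =
          ((1 + s ^ 2 : ℝ) : ℂ) := by
        simp; linear_combination (-(s:ℂ)^2) * Complex.I_mul_I
      have t2 : star (1 - (s : ℂ) * Complex.I) * (1 - (s : ℂ) * Complex.I) =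
          ((1 + s ^ 2 : ℝ) : ℂ) := by
        simp; linear_combination (-(s:ℂ)^2) * Complex.I_mul_I
      ext i j; fin_cases i; fin_cases j
      simp only [Matrix.add_apply, Matrix.mul_apply, Matrix.star_apply, Matrix.of_apply,
        star_smul, Matrix.smul_apply, smul_mul_smul_comm, t1, t2, G, smul_add]
      simp
    rw [e4, map_smul, norm_smul, Complex.norm_real, Real.norm_of_nonneg (by positivity)]
    have : (0 : ℝ) ≤ 1 + s ^ 2 := by positivity
    nlinarith)
  rw [← map_star] at hs
  have hs2 := ι.injective hs
  have hs3 := congrFun (congrFun hs2 0) 0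
  simp only [D, Matrix.star_apply, Matrix.of_apply, star_sub, star_one] at hs3
  have : (2 : ℂ) • star (P 1 : B) = (2 : ℂ) • (P 1 : B) := by
    rw [two_smul, two_smul]
    have := congrArg (· + 1) hs3
    convert this using 1 <;> abel
  exact smul_right_injective B (two_ne_zero (α := ℂ)) this

set_option maxHeartbeats 2000000 in
theorem aux_forward {B : Type*} [CStarAlgebra B] {C : Type*} [CStarAlgebra C]
    (ι : Matrix (Fin 4) (Fin 4) B ≃⋆ₐ[ℂ] C)
    (A : Subalgebra ℂ B) (P : A →ₗ[ℂ] A) (hP : ∀ x : A, P (P x) = P x)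
    (h : ∀ x : Matrix (Fin 4) (Fin 4) A,
        ‖ι (star (x.map fun a => ((P a : B))) * (x.map fun a => ((P a : B))) +
            star (x.map (Subtype.val) - x.map fun a => ((P a : B))) *
              (x.map (Subtype.val) - x.map fun a => ((P a : B))))‖
          = ‖ι (x.map (Subtype.val))‖ ^ 2) (hsa : star (P 1 : B) = P 1) :
    (P 1 : B) * P 1 = P 1 ∧ ∀ x : A, (P x : B) = P 1 * (x : B) := by
  letI : PartialOrder C := CStarAlgebra.spectralOrder C
  haveI : StarOrderedRing C := CStarAlgebra.spectralOrderedRing C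
  set p : Matrix (Fin 4) (Fin 4) B :=
    !![1, 0, 0, 0; 0, 0, 0, 0; 0, 0, 0, 0; 0, 0, 0, 0] with hp
  -- corner lemma: a nonpositive matrix with zero corner has zero off-diagonal entry
  have corner : ∀ M : Matrix (Fin 4) (Fin 4) B, ι M ≤ 0 → M 0 0 = 0 → M 1 0 = 0 := by
    intro M hM h0
    have h1 := aux_mul_zero (ι (-M)) (ι p) (by rw [map_neg]; exact neg_nonneg.mpr hM) (by
      rw [← map_star, ← map_mul, ← map_mul, ← map_zero ι]
      congr 1; ext i j
      simp only [Matrix.mul_apply, Fin.sum_univ_four, Matrix.star_apply]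
      fin_cases i <;> fin_cases j <;> simp [p, h0])
    rw [← map_mul, ← map_zero ι] at h1
    have h2 := congrFun (congrFun (ι.injective h1) 1) 0
    simpa [Matrix.mul_apply, Fin.sum_univ_four, p] using h2
  obtain ⟨E, hE⟩ : ∃ E, E = P 1 := ⟨_, rfl⟩
  have hPE : P E = E := by rw [hE, hP]
  have hPF : P (1 - E) = 0 := by rw [map_sub, hPE, ← hE, sub_self]
  rw [← hE] at hsa ⊢
  have hidem : (E : B) * E = E := by
    have m := aux_mat ι A P hP h E (1 - E) (-(1/2 : ℂ) • (E * E)) (-(1/2 : ℂ) • (E * (1 - E)))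
      (-(1/2 : ℂ) • ((1 - E) * E)) (-(1/2 : ℂ) • ((1 - E) * (1 - E))) (by
        apply le_of_eq
        rw [← map_zero ι]
        congr 1; ext i j
        simp only [Matrix.mul_apply, Fin.sum_univ_four, Matrix.star_apply, Matrix.add_apply]
        fin_cases i <;> fin_cases j <;> simp [hsa] <;> module)
    have m2 := corner _ m
    simp only [Matrix.mul_apply, Fin.sum_univ_four, Matrix.star_apply, Matrix.add_apply] at m2
    simp [hsa, hPE, hPF] at m2
    have m3 := m2 (by module)
    have : (E : B) - E * E = 0 := by
      rw [← neg_eq_zero, ← m3]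
      simp only [mul_sub, sub_mul, mul_one, one_mul]
      module
    exact (sub_eq_zero.mp this).symm
  refine ⟨hidem, ?_⟩
  have main : ∀ x : A, (E : B) * P x + (1 - E) * (x - P x) = x := by
    intro x
    set T : Matrix (Fin 4) (Fin 4) B :=
      !![0, (x : B), 0, 0; 0, 0, 0, 0; 0, 0, 0, 0; 0, 0, 0, 0] with hT
    set q : Matrix (Fin 4) (Fin 4) B :=
      !![0, 0, 0, 0; 0, 1, 0, 0; 0, 0, 0, 0; 0, 0, 0, 0] with hq
    set K : ℝ := ‖ι T‖ ^ 2
    have m := aux_mat ι A P hP h 1 x (-(1/2 : ℂ) • 1) (-x) 0 (-((K : ℂ) / 2) • 1) (by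
        have t1 := star_left_conjugate_le_conjugate (aux_star_mul_le (ι T) K le_rfl) (ι q)
        rw [← sub_nonpos] at t1
        convert t1 using 1
        rw [Algebra.algebraMap_eq_smul_one, ← Complex.coe_smul]
        simp only [← map_star, ← map_mul, ← map_one ι, ← map_smul, ← map_sub]
        congr 1; ext i j
        simp only [Matrix.mul_apply, Fin.sum_univ_four, Matrix.star_apply, Matrix.add_apply,
          Matrix.sub_apply]
        fin_cases i <;> fin_cases j <;> simp [T, q] <;> module)
    have m2 := corner _ m
    simp only [Matrix.mul_apply, Fin.sum_univ_four, Matrix.star_apply, Matrix.add_apply] at m2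
    simp [hsa, ← hE] at m2
    have m3 := m2 (by simp only [mul_sub, sub_mul, mul_one, one_mul, hidem]; module)
    have m4 := congrArg star m3
    simp [hsa] at m4
    rw [← sub_eq_zero, ← m4]
    abel
  have hp1 : ∀ x : A, (E : B) * P x = P x := by
    intro x
    have := main (P x)
    simpa [hP] using this
  have hq1 : ∀ x : A, (E : B) * (x - P x) = 0 := by
    intro x
    have := main (x - P x)
    simp [hP, sub_mul] at this
    simpa using this
  intro x
  have := hq1 x
  rw [mul_sub, hp1, sub_eq_zero] at this
  exact this.symm



/-- Let `B` be a C*-algebra, `A ⊆ B` a norm-closed unital subalgebra and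
`P : A → A` a linear map.  The C*-algebra `Mₙ(B)` (with its unique C*-norm) is modelled by an
arbitrary C*-algebra `Mat n` with a ⋆-algebra isomorphism `ι n` from the ⋆-algebra of matrices
`Matrix (Fin n) (Fin n) B`; the norm of a matrix over `B` (in particular of a matrix over `A`) is
`‖ι n ·‖`.  Then `P` is a complete left `M`-projection (idempotent with
`‖(Pₙx)*(Pₙx) + (x − Pₙx)*(x − Pₙx)‖ = ‖x‖²` for every `n ≥ 1` and every `n × n` matrix `x`
over `A`) iff there is `e ∈ A` with `e = e* = e²` in `B` and `P(x) = e·x` for all `x ∈ A`. -/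
theorem stmt_2 {B : Type*} [CStarAlgebra B]
    (Mat : ℕ → Type*) [∀ n, CStarAlgebra (Mat n)]
    (ι : ∀ n, Matrix (Fin n) (Fin n) B ≃⋆ₐ[ℂ] Mat n)
    (A : Subalgebra ℂ B) (hA : IsClosed (A : Set B))
    (P : A →ₗ[ℂ] A) :
    ((∀ x : A, P (P x) = P x) ∧
      ∀ n : ℕ, 1 ≤ n → ∀ x : Matrix (Fin n) (Fin n) A,
        ‖ι n (star (x.map fun a => ((P a : B))) * (x.map fun a => ((P a : B))) +
            star (x.map (Subtype.val) - x.map fun a => ((P a : B))) *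
              (x.map (Subtype.val) - x.map fun a => ((P a : B))))‖
          = ‖ι n (x.map (Subtype.val))‖ ^ 2) ↔
    ∃ e : B, e ∈ A ∧ star e = e ∧ e * e = e ∧ ∀ x : A, (P x : B) = e * (x : B) := by
  constructor
  · rintro ⟨hP, h⟩
    have hsa := aux_e_sa (ι 1) A P hP (h 1 le_rfl)
    obtain ⟨h1, h2⟩ := aux_forward (ι 4) A P hP (h 4 (by norm_num)) hsa
    exact ⟨P 1, (P 1).2, hsa, h1, h2⟩
  · rintro ⟨e, heA, hs, he, hP⟩
    refine ⟨fun x => Subtype.ext ?_, fun n _ x => ?_⟩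
    · rw [hP, hP, ← mul_assoc, he]
    · rw [pow_two, ← CStarRing.norm_star_mul_self, ← map_star, ← map_mul]
      congr 2
      have e1 : (x.map fun a => ((P a : B))) =
          Matrix.diagonal (fun _ => e) * x.map Subtype.val := by
        ext i j; simp [hP]
      have hD : star (Matrix.diagonal (fun _ => e) : Matrix (Fin n) (Fin n) B) =
          Matrix.diagonal (fun _ => e) := by
        rw [Matrix.star_eq_conjTranspose, Matrix.diagonal_conjTranspose]
        congr 1; funext i; simp [hs]
      have hDD : (Matrix.diagonal (fun _ => e) : Matrix (Fin n) (Fin n) B) *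
          Matrix.diagonal (fun _ => e) = Matrix.diagonal (fun _ => e) := by
        rw [Matrix.diagonal_mul_diagonal]; simp [he]
      rw [e1]
      generalize (Matrix.diagonal (fun _ => e) : Matrix (Fin n) (Fin n) B) = D at *
      generalize x.map Subtype.val = y
      have hD2 : ∀ z, D * (D * z) = D * z := fun z => by rw [← mul_assoc, hDD]
      simp only [star_sub, star_mul, hD, mul_sub, sub_mul, mul_assoc, hD2]
      abel
end
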